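/- Let k be a field of characteristic zero and let h_0,…,h_n ∈ k[x_0,…,x_n] be homogeneous polynomials, each of degree ≥ 1, satisfying Σ_{i=0}^n h_i·(∂h_j/∂x_i) = 0 for every j = 0,…,n. Then for every j the composition h_j(h_0,…,h_n), obtained by substituting h_i for x_i in h_j, is the zero polynomial; in other words, the image of the rational map ψ = (h_0 : … : h_n) is contained in its base locus V(h_0,…,h_n). -/

import Mathlib

open MvPolynomial

/-!
Let `D = ∑ i, hᵢ ∂/∂xᵢ`. The hypothesis says that `D` kills every `hᵢ = D xᵢ`, so the `hᵢ` are
constants for `D`. If `p` is homogeneous of degree `e`, then `Dᵉ p = ∑ i, hᵢ Dᵉ⁻¹(∂p/∂xᵢ)`, so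
Euler's identity and induction on `e` give `Dᵉ p = e! · p(h₀, …, hₙ)`. For `p = hⱼ` and `e ≥ 1` the
left side vanishes.
-/

section Derivation

variable {R A σ : Type*} [CommSemiring R] [CommSemiring A] [Algebra R A]

lemma derivation_aeval_eq_sum [Fintype σ] {M : Type*} [AddCommMonoid M] [Module A M] [Module R M]
    (D : Derivation R A M) (x : σ → A) (p : MvPolynomial σ R) :
    D (aeval x p) = ∑ i, aeval x (pderiv i p) • D (x i) := by
  classical
  induction p using MvPolynomial.induction_on with
  | C a => simp
  | add p q hp hq => simp only [map_add, hp, hq, add_smul, Finset.sum_add_distrib]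
  | mul_X p j hp =>
    have hX : ∑ i, aeval x (p * pderiv i (X j)) • D (x i) = aeval x p • D (x j) := by
      simp [pderiv_X, Pi.single_apply, apply_ite (aeval x), ite_smul]
    simp only [Derivation.leibniz, map_add, map_mul, aeval_X, smul_eq_mul, add_smul,
      Finset.sum_add_distrib, mul_smul, ← Finset.smul_sum, hp] at hX ⊢
    rw [hX]

lemma derivation_iterate_sum_smul_of_eq_zero {ι : Type*} (D : Derivation R A A) (s : Finset ι)
    (a c : ι → A) (hc : ∀ i ∈ s, D (c i) = 0) (m : ℕ) :
    D^[m] (∑ i ∈ s, a i • c i) = ∑ i ∈ s, D^[m] (a i) • c i := by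
  induction m generalizing a with
  | zero => rfl
  | succ m ih =>
    have hD : D (∑ i ∈ s, a i • c i) = ∑ i ∈ s, D (a i) • c i := by
      rw [map_sum]
      exact Finset.sum_congr rfl fun i hi ↦ by simp [hc i hi, mul_comm]
    simp only [Function.iterate_succ_apply, hD, ih]

theorem derivation_iterate_aeval_of_isHomogeneous [Finite σ] (D : Derivation R A A)
    {x : σ → A} (hx : ∀ i, D (D (x i)) = 0) {p : MvPolynomial σ R} {e : ℕ}
    (hp : p.IsHomogeneous e) :
    D^[e] (aeval x p) = e.factorial • aeval (fun i ↦ D (x i)) p := by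
  cases nonempty_fintype σ
  induction e generalizing p with
  | zero =>
    rw [← totalDegree_zero_iff_isHomogeneous, totalDegree_eq_zero_iff_eq_C] at hp
    rw [hp]
    simp
  | succ e ih =>
    have euler : ∑ i, aeval (fun i ↦ D (x i)) (pderiv i p) * D (x i)
        = (e + 1) • aeval (fun i ↦ D (x i)) p := by
      simpa [mul_comm] using congrArg (aeval fun i ↦ D (x i)) hp.sum_X_mul_pderiv
    calc D^[e + 1] (aeval x p)
        = ∑ i, D^[e] (aeval x (pderiv i p)) • D (x i) := by
          rw [Function.iterate_succ_apply, derivation_aeval_eq_sum,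
            derivation_iterate_sum_smul_of_eq_zero D _ _ _ fun i _ ↦ hx i]
      _ = ∑ i, (e.factorial • aeval (fun i ↦ D (x i)) (pderiv i p)) • D (x i) := by
          simp only [ih hp.pderiv]
      _ = (e + 1).factorial • aeval (fun i ↦ D (x i)) p := by
          simp only [smul_eq_mul, smul_mul_assoc, ← Finset.smul_sum, euler]
          rw [smul_smul, Nat.factorial_succ, mul_comm]

theorem aeval_derivation_eq_zero_of_isHomogeneous [Finite σ] [IsAddTorsionFree A]
    (D : Derivation R A A) {x : σ → A} (hx : ∀ i, D (D (x i)) = 0) {p : MvPolynomial σ R}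
    {e : ℕ} (he : e ≠ 0) (hp : p.IsHomogeneous e) (hDp : D (aeval x p) = 0) :
    aeval (fun i ↦ D (x i)) p = 0 := by
  have hiter : D^[e] (aeval x p) = 0 := by
    obtain ⟨m, rfl⟩ := Nat.exists_eq_succ_of_ne_zero he
    rw [Function.iterate_succ_apply, hDp, iterate_map_zero]
  rw [derivation_iterate_aeval_of_isHomogeneous D hx hp] at hiter
  exact (smul_eq_zero_iff_right e.factorial_ne_zero).mp hiter

end Derivation

lemma mkDerivation_eq_sum_mul_pderiv {R σ : Type*} [CommSemiring R] [Fintype σ]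
    (h : σ → MvPolynomial σ R) (p : MvPolynomial σ R) :
    mkDerivation R h p = ∑ i, h i * pderiv i p := by
  simpa [mul_comm] using derivation_aeval_eq_sum (mkDerivation R h) X p

instance mvPolynomial_isAddTorsionFree {R σ : Type*} [CommSemiring R] [IsAddTorsionFree R] :
    IsAddTorsionFree (MvPolynomial σ R) :=
  (AddMonoidAlgebra.coeffLinearEquiv R).injective.isAddTorsionFree
    (AddMonoidAlgebra.coeffLinearEquiv R).toLinearMap.toAddMonoidHom

theorem stmt9_general {R σ : Type*} [CommSemiring R] [IsAddTorsionFree R] [Fintype σ]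
    (h : σ → MvPolynomial σ R) (hrel : ∀ j, ∑ i, h i * pderiv i (h j) = 0)
    {p : MvPolynomial σ R} {e : ℕ} (he : e ≠ 0) (hp : p.IsHomogeneous e)
    (hrel_p : ∑ i, h i * pderiv i p = 0) :
    aeval h p = 0 := by
  simp only [← mkDerivation_eq_sum_mul_pderiv] at hrel hrel_p
  simpa using aeval_derivation_eq_zero_of_isHomogeneous (mkDerivation R h) (x := X)
    (by simpa using hrel) he hp (by simpa using hrel_p)

/-- If `h₀, …, hₙ` are homogeneous polynomials of degrees `≥ 1` satisfying
`∑ i, hᵢ · ∂hⱼ/∂xᵢ = 0` for all `j`, then `hⱼ(h₀, …, hₙ) = 0` for every `j`: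
the image of the rational map `ψ = (h₀ : … : hₙ)` is contained in its base locus. -/
theorem stmt9 {k : Type*} [Field k] [CharZero k] (n : ℕ)
    (h : Fin (n + 1) → MvPolynomial (Fin (n + 1)) k)
    (e : Fin (n + 1) → ℕ) (he : ∀ j, 1 ≤ e j)
    (hhom : ∀ j, (h j).IsHomogeneous (e j))
    (hrel : ∀ j, ∑ i, h i * pderiv i (h j) = 0) :
    ∀ j, aeval h (h j) = 0 :=
  fun j ↦ stmt9_general h hrel (Nat.one_le_iff_ne_zero.mp (he j)) (hhom j) (hrel j)
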